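/- arXiv:1806.07591 — 2 statements merged into one kernel-verified Lean document; each statement's English description precedes it below -/
import Mathlib

section
/- Let V ⊆ ℝ³ be a compact convex set with positive Lebesgue measure and let y be a point in the interior of V. Then there exists a point y' ∈ V such that ∫_V ( |x − y|² − min(|x − y|, |x − y'|)² ) dx ≥ Γ₁ · |V|^{5/3}, where Γ₁ := (2/5)^{2/3}/40. -/
open MeasureTheory

noncomputable section

/-- Euclidean 3-space. -/
abbrev E3 := EuclideanSpace ℝ (Fin 3)

/-- Γ₁ = (2/5)^{2/3} / 40 -/
def Gamma1 : ℝ := ((2 / 5 : ℝ) ^ ((2 : ℝ) / 3)) / 40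

def sg (b : Bool) : ℝ := if b then 1 else -1

lemma cube_vol (y : E3) (a : ℝ) (ha : 0 ≤ a) :
    volume {x : E3 | ∀ i, |x i - y i| ≤ a} = ENNReal.ofReal ((2 * a) ^ 3) := by
  have h := (EuclideanSpace.volume_preserving_symm_measurableEquiv_toLp (Fin 3)).symm
  have he : {x : E3 | ∀ i, |x i - y i| ≤ a} =
      (MeasurableEquiv.toLp 2 (Fin 3 → ℝ)).symm ⁻¹'
        (Set.Icc (fun i => y i - a) (fun i => y i + a)) := by
    ext x
    simp only [Set.mem_setOf_eq, Set.mem_preimage, Set.mem_Icc, Pi.le_def, abs_le]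
    constructor
    · intro h
      exact ⟨fun i => by have := (h i).1; show y i - a ≤ x i; linarith,
        fun i => by have := (h i).2; show x i ≤ y i + a; linarith⟩
    · rintro ⟨h1, h2⟩ i
      have h1 : y i - a ≤ x i := h1 i
      have h2 : x i ≤ y i + a := h2 i
      constructor <;> linarith
  rw [he, (EuclideanSpace.volume_preserving_symm_measurableEquiv_toLp (Fin 3)).measure_preimage
    measurableSet_Icc.nullMeasurableSet, Real.volume_Icc_pi]
  simp only [Fin.prod_univ_three]
  rw [← ENNReal.ofReal_mul (by linarith), ← ENNReal.ofReal_mul (by nlinarith)]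
  congr 1
  ring

lemma proj_exists (V : Set E3) (hVcomp : IsCompact V) (hVconv : Convex ℝ V)
    (hne : V.Nonempty) (q : E3) : ∃ p ∈ V, ∀ x ∈ V, dist x p ≤ dist x q := by
  obtain ⟨p, hp, hpe⟩ := exists_norm_eq_iInf_of_complete_convex hne hVcomp.isComplete hVconv q
  have h := (norm_eq_iInf_iff_real_inner_le_zero hVconv hp).1 hpe
  refine ⟨p, hp, fun x hx => ?_⟩
  have h1 := h x hx
  rw [dist_eq_norm, dist_eq_norm]
  have h2 : ‖x - q‖ ^ 2 = ‖x - p‖ ^ 2 - 2 * inner ℝ (x - p) (q - p) + ‖q - p‖ ^ 2 := by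
    rw [← norm_sub_sq_real]; congr 2; abel
  rw [real_inner_comm] at h1
  exact le_of_sq_le_sq (by nlinarith [sq_nonneg ‖q - p‖]) (norm_nonneg _)

lemma dist_shift (x y : E3) (i : Fin 3) (s : ℝ) :
    dist x (y + EuclideanSpace.single i s) ^ 2 = dist x y ^ 2 - 2 * s * (x i - y i) + s ^ 2 := by
  rw [dist_eq_norm, dist_eq_norm, ← sub_sub, norm_sub_sq_real, EuclideanSpace.inner_single_right]
  simp
  ring

theorem stmt_1 (V : Set E3) (hVcomp : IsCompact V) (hVconv : Convex ℝ V)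
    (hVvol : 0 < volume V) (y : E3) (hy : y ∈ interior V) :
    ∃ y' ∈ V,
      (∫ x in V, (dist x y ^ 2 - (min (dist x y) (dist x y')) ^ 2)) ≥
        Gamma1 * (volume V).toReal ^ ((5 : ℝ) / 3) := by
  have hfin : volume V ≠ ⊤ := hVcomp.measure_lt_top.ne
  set v : ℝ := (volume V).toReal with hv
  have hvpos : 0 < v := ENNReal.toReal_pos hVvol.ne' hfin
  have hvr : volume.real V = v := rfl
  set l : ℝ := ((2 / 5 : ℝ) * v) ^ ((1 : ℝ) / 3) with hl
  have hlpos : 0 < l := by positivity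
  have hl3 : l ^ 3 = 2 / 5 * v := by
    rw [hl, ← Real.rpow_natCast, ← Real.rpow_mul (by positivity)]; norm_num
  have hl2 : l ^ 2 = (2 / 5 : ℝ) ^ ((2 : ℝ) / 3) * v ^ ((2 : ℝ) / 3) := by
    rw [hl, ← Real.rpow_natCast, ← Real.rpow_mul (by positivity),
      ← Real.mul_rpow (by positivity) (by positivity)]; norm_num
  have hv53 : v ^ ((5 : ℝ) / 3) = v ^ ((2 : ℝ) / 3) * v := by
    nth_rewrite 3 [← Real.rpow_one v]
    rw [← Real.rpow_add hvpos]; norm_num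
  set a := l / 2 with ha
  have hapos : 0 < a := by positivity
  let S : Fin 3 × Bool → Set E3 := fun k => V ∩ {x | a ≤ sg k.2 * (x k.1 - y k.1)}
  let Q : Set E3 := {x : E3 | ∀ i, |x i - y i| ≤ a}
  have hQ : volume.real Q = 2 / 5 * v := by
    rw [Measure.real, cube_vol y a hapos.le, ENNReal.toReal_ofReal (by positivity), ← hl3, ha]
    ring
  have hQt : volume Q ≠ ⊤ := by rw [cube_vol y a hapos.le]; exact ENNReal.ofReal_ne_top
  have hSt : ∀ k, volume (S k) ≠ ⊤ := fun k =>
    ne_top_of_le_ne_top hfin (measure_mono Set.inter_subset_left)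
  have hcov : V ⊆ Q ∪ ⋃ k, S k := by
    intro x hx
    by_cases hxQ : x ∈ Q
    · exact Or.inl hxQ
    · right
      simp only [Q, Set.mem_setOf_eq, not_forall, not_le] at hxQ
      obtain ⟨i, hi⟩ := hxQ
      rcases lt_abs.1 hi with h | h
      · exact Set.mem_iUnion.2 ⟨(i, true), hx, by simp [sg]; linarith⟩
      · exact Set.mem_iUnion.2 ⟨(i, false), hx, by simp [sg]; linarith⟩
  have hsum : v ≤ 2 / 5 * v + ∑ k, volume.real (S k) := by
    have hU : volume (⋃ k, S k) ≠ ⊤ := 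
      ne_top_of_le_ne_top hfin (measure_mono (Set.iUnion_subset fun k => Set.inter_subset_left))
    calc v = volume.real V := rfl
      _ ≤ volume.real (Q ∪ ⋃ k, S k) := measureReal_mono hcov (measure_union_ne_top hQt hU)
      _ ≤ volume.real Q + volume.real (⋃ k, S k) := measureReal_union_le _ _
      _ ≤ _ := by
        rw [hQ]
        gcongr
        exact measureReal_iUnion_fintype_le _
  obtain ⟨k, hk⟩ : ∃ k, v / 10 ≤ volume.real (S k) := by
    by_contra! hcon
    have : ∑ k, volume.real (S k) < ∑ k : Fin 3 × Bool, v / 10 :=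
      Finset.sum_lt_sum_of_nonempty Finset.univ_nonempty (fun k _ => hcon k)
    simp at this
    linarith
  obtain ⟨p, hpV, hp⟩ := proj_exists V hVcomp hVconv ⟨y, interior_subset hy⟩
    (y + EuclideanSpace.single k.1 (sg k.2 * a))
  refine ⟨p, hpV, ?_⟩
  have hsg : sg k.2 ^ 2 = 1 := by unfold sg; split_ifs <;> norm_num
  have hint : IntegrableOn (fun x => dist x y ^ 2 - (min (dist x y) (dist x p)) ^ 2) V :=
    ContinuousOn.integrableOn_compact hVcomp (by fun_prop)
  have hSm : MeasurableSet (S k) := by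
    refine hVcomp.measurableSet.inter (IsClosed.measurableSet ?_)
    exact isClosed_le (by fun_prop) (by fun_prop)
  have hlow : ∀ x ∈ S k, a ^ 2 ≤ dist x y ^ 2 - (min (dist x y) (dist x p)) ^ 2 := by
    rintro x ⟨hxV, hx⟩
    have hx : a ≤ sg k.2 * (x k.1 - y k.1) := hx
    have h1 : min (dist x y) (dist x p) ^ 2
        ≤ dist x (y + EuclideanSpace.single k.1 (sg k.2 * a)) ^ 2 := by
      gcongr
      exact (min_le_right _ _).trans (hp x hxV)
    rw [dist_shift, mul_pow, hsg] at h1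
    nlinarith
  have h1 : a ^ 2 * volume.real (S k) ≤
      ∫ x in S k, (dist x y ^ 2 - (min (dist x y) (dist x p)) ^ 2) :=
    setIntegral_ge_of_const_le_real hSm (hSt k) hlow (hint.mono_set Set.inter_subset_left)
  have h2 : (∫ x in S k, (dist x y ^ 2 - (min (dist x y) (dist x p)) ^ 2)) ≤
      ∫ x in V, (dist x y ^ 2 - (min (dist x y) (dist x p)) ^ 2) := by
    refine setIntegral_mono_set hint (Filter.Eventually.of_forall fun x => ?_)
      (Filter.Eventually.of_forall fun x hx => hx.1)
    have : min (dist x y) (dist x p) ^ 2 ≤ dist x y ^ 2 := by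
      gcongr
      exact min_le_left _ _
    simpa using this
  have h3 : a ^ 2 * (v / 10) ≤ a ^ 2 * volume.real (S k) := by gcongr
  have h4 : Gamma1 * v ^ ((5 : ℝ) / 3) = a ^ 2 * (v / 10) := by
    rw [hv53, Gamma1, ha, div_pow, hl2]; ring
  rw [h4]
  linarith
end
end

section
/- Let n ≥ 1 and let Y_n be a minimizer of the quantization energy among subsets of Q with n points. Then for every y ∈ Y_n, the Voronoi cell V of y satisfies diam(V) ≥ Γ₃ · n^{−1/3}, where Γ₃ := ω₃^{−1/5}·Γ₁^{1/5} and Γ₁ := (2/5)^{2/3}/40. -/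
open MeasureTheory

noncomputable section

/-- The closed unit cube Q = [0,1]³. -/
def Qcube : Set E3 := {x | ∀ i, x i ∈ Set.Icc (0 : ℝ) 1}

/-- The quantization energy E(Y) = ∫_Q dist(x,Y)² dx. -/
def quantE (Y : Finset E3) : ℝ := ∫ x in Qcube, (Metric.infDist x (↑Y : Set E3)) ^ 2

/-- The Voronoi cell of a generator y ∈ Y, relative to Q. -/
def vorCell (Y : Finset E3) (y : E3) : Set E3 :=
  {x ∈ Qcube | ∀ z ∈ Y, dist x y ≤ dist x z}

/-- Y is a minimizer of the quantization energy among n-point subsets of Q. -/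
def IsMinimizer (n : ℕ) (Y : Finset E3) : Prop :=
  (↑Y : Set E3) ⊆ Qcube ∧ Y.card = n ∧
    ∀ Z : Finset E3, (↑Z : Set E3) ⊆ Qcube → Z.card = n → quantE Y ≤ quantE Z

/-- ω₃ = 4π/3, the volume of the unit ball in ℝ³. -/
def omega3 : ℝ := 4 * Real.pi / 3

/-- Γ₃ = ω₃^{-1/5} Γ₁^{1/5}. -/
def Gamma3 : ℝ := omega3 ^ (-(1 : ℝ) / 5) * Gamma1 ^ ((1 : ℝ) / 5)

/-- Γ₅ = (1/4)(√(1 + 2⁴·3³/(5²·10³)) − 1) Γ₃. -/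
def Gamma5 : ℝ :=
  (1 / 4) * (Real.sqrt (1 + (2 ^ 4 * 3 ^ 3 : ℝ) / (5 ^ 2 * 10 ^ 3)) - 1) * Gamma3

/-- Γ₄, the diameter upper-bound constant. -/
def Gamma4 : ℝ :=
  (2 * (12 : ℝ) ^ ((1 : ℝ) / 4) * (16 : ℝ) ^ ((1 : ℝ) / 3) /
      (Real.pi ^ ((1 : ℝ) / 4) * omega3 ^ ((1 : ℝ) / 12))) *
    (Real.sqrt (1 + (2 ^ 4 * 3 ^ 3 : ℝ) / (5 ^ 2 * 10 ^ 3)) - 1) ^ (-(1 : ℝ) / 2) *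
    ((5 ^ 2 * 10 ^ 3 : ℝ) / (2 ^ 2 * 3 ^ 3)) ^ ((1 : ℝ) / 4)

lemma box_eq (a b : ℝ) : {x : E3 | ∀ i, x i ∈ Set.Icc a b} =
    (WithLp.ofLp : E3 → (Fin 3 → ℝ)) ⁻¹' (Set.Icc (fun _ => a) (fun _ => b)) := by
  ext x
  simp only [Set.mem_ofPred_eq, Set.mem_preimage, Set.mem_Icc, Pi.le_def]
  exact ⟨fun h => ⟨fun i => (h i).1, fun i => (h i).2⟩, fun h i => ⟨h.1 i, h.2 i⟩⟩

lemma box_vol (a b : ℝ) (hab : a ≤ b) :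
    volume {x : E3 | ∀ i, x i ∈ Set.Icc a b} = ENNReal.ofReal ((b - a) ^ 3) := by
  rw [box_eq, (PiLp.volume_preserving_ofLp (Fin 3)).measure_preimage
    measurableSet_Icc.nullMeasurableSet, Real.volume_Icc_pi]
  simp [ENNReal.ofReal_pow (sub_nonneg.2 hab)]

lemma box_closed (a b : ℝ) : IsClosed {x : E3 | ∀ i, x i ∈ Set.Icc a b} := by
  rw [box_eq]
  exact isClosed_Icc.preimage (PiLp.continuous_ofLp 2 _)

lemma box_compact (a b : ℝ) : IsCompact {x : E3 | ∀ i, x i ∈ Set.Icc a b} := by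
  rw [box_eq]
  exact (PiLp.homeomorph 2 (fun _ : Fin 3 => ℝ)).isClosedEmbedding.isCompact_preimage isCompact_Icc

lemma Q_compact : IsCompact Qcube := box_compact 0 1
lemma Q_closed : IsClosed Qcube := box_closed 0 1
lemma Q_meas : MeasurableSet Qcube := Q_closed.measurableSet
lemma Q_vol : volume Qcube = 1 := by
  have := box_vol 0 1 (by norm_num)
  simpa [Qcube] using this

lemma Q_convex : Convex ℝ Qcube := by
  intro x hx y hy a b ha hb hab i
  have h1 := hx i
  have h2 := hy i
  exact (convex_Icc (0:ℝ) 1) h1 h2 ha hb hab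

lemma radial (k : ℕ) (hk : 1 ≤ k) (D : ℝ) (hD : 0 ≤ D) (x : E3) :
    ∫ p : E3, max 0 (D ^ k - dist x p ^ k) = omega3 * D ^ (k + 3) * (1 - 3 / (k + 3)) := by
  have h1 : ∫ p : E3, max 0 (D ^ k - dist x p ^ k) = ∫ p : E3, max 0 (D ^ k - ‖p‖ ^ k) := by
    rw [← integral_sub_left_eq_self (fun p : E3 => max 0 (D ^ k - ‖p‖ ^ k)) volume x]
    simp [dist_eq_norm]
  rw [h1, integral_fun_norm_addHaar volume (fun t : ℝ => max 0 (D ^ k - t ^ k))]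
  have hb : volume.real (Metric.ball (0 : E3) 1) = omega3 := by
    rw [measureReal_def, EuclideanSpace.volume_ball_fin_three]
    simp [omega3, Real.pi_pos.le]
    rw [ENNReal.toReal_ofReal (by positivity)]; ring
  have h2 : ∫ y in Set.Ioi (0 : ℝ), y ^ 2 • max 0 (D ^ k - y ^ k) =
      ∫ y in (0:ℝ)..D, (D ^ k * y ^ 2 - y ^ (k + 2)) := by
    rw [intervalIntegral.integral_of_le hD]
    rw [setIntegral_eq_of_subset_of_forall_sdiff_eq_zero measurableSet_Ioi
      Set.Ioc_subset_Ioi_self (f := fun y => y ^ 2 • max 0 (D ^ k - y ^ k))]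
    · apply setIntegral_congr_fun measurableSet_Ioc
      intro y hy
      have : y ^ k ≤ D ^ k := pow_le_pow_left₀ hy.1.le hy.2 k
      simp only [smul_eq_mul]
      rw [max_eq_right (by linarith)]; ring
    · intro y hy
      simp only [Set.mem_diff, Set.mem_Ioi, Set.mem_Ioc, not_and, not_le] at hy
      have : D ^ k ≤ y ^ k := pow_le_pow_left₀ hD (hy.2 hy.1).le k
      rw [max_eq_left (by linarith)]; simp
  have h3 : ∫ y in (0:ℝ)..D, (D ^ k * y ^ 2 - y ^ (k + 2)) =
      D ^ (k+3) / 3 - D ^ (k + 3) / (k + 3) := by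
    rw [intervalIntegral.integral_sub ((by fun_prop : Continuous _).intervalIntegrable _ _)
      ((by fun_prop : Continuous _).intervalIntegrable _ _)]
    simp [integral_pow]
    ring
  simp only [finrank_euclideanSpace, Fintype.card_fin, hb, nsmul_eq_mul]
  simp only [show 3 - 1 = 2 from rfl]
  rw [h2, h3]
  simp only [smul_eq_mul]
  field_simp
  push_cast
  ring

lemma vol_le_diam (V : Set E3) (hV : V ⊆ Qcube) :
    volume.real V ≤ Metric.diam V ^ 3 := by
  have hb : Bornology.IsBounded V := Q_compact.isBounded.subset hV
  have h1 : volume V = volume ((WithLp.toLp 2 : (Fin 3 → ℝ) → E3) ⁻¹' V) := by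
    exact ((PiLp.volume_preserving_toLp (Fin 3)).measure_preimage_equiv
      (f := MeasurableEquiv.toLp 2 (Fin 3 → ℝ)) V).symm
  have h2 : Metric.ediam ((WithLp.toLp 2 : (Fin 3 → ℝ) → E3) ⁻¹' V) ≤ Metric.ediam V := by
    apply Metric.ediam_le
    intro x hx y hy
    refine le_trans ?_ (Metric.edist_le_ediam_of_mem hx hy)
    simpa using (PiLp.lipschitzWith_ofLp 2 (fun _ : Fin 3 => ℝ)) (WithLp.toLp 2 x) (WithLp.toLp 2 y)
  have h3 := (Real.volume_pi_le_diam_pow ((WithLp.toLp 2 : (Fin 3 → ℝ) → E3) ⁻¹' V)).trans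
    (pow_le_pow_left' h2 _)
  rw [← h1] at h3
  have := ENNReal.toReal_mono (by simpa using hb.ediam_ne_top) h3
  simpa [Metric.diam, measureReal_def] using this

lemma infDist_int (Y : Finset E3) :
    IntegrableOn (fun x => (Metric.infDist x (↑Y : Set E3)) ^ 2) Qcube :=
  ((Metric.continuous_infDist_pt _).pow 2).continuousOn.integrableOn_compact Q_compact

lemma quantE_anti (Y Z : Finset E3) (hne : Y.Nonempty) (h : Y ⊆ Z) : quantE Z ≤ quantE Y := by
  apply setIntegral_mono (infDist_int _) (infDist_int _)
  intro x
  exact pow_le_pow_left₀ Metric.infDist_nonneg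
    (Metric.infDist_le_infDist_of_subset (by exact_mod_cast h) (by simpa using hne)) 2

lemma min_le (n : ℕ) (Y Z : Finset E3) (hY : IsMinimizer n Y) (hZ : (↑Z : Set E3) ⊆ Qcube)
    (hne : Z.Nonempty) (hc : Z.card ≤ n) : quantE Y ≤ quantE Z := by
  classical
  obtain ⟨hQ, hn, hm⟩ := hY
  obtain ⟨u, h1, h2, h3⟩ := Finset.exists_subsuperset_card_eq (Finset.subset_union_left (s₁ := Z) (s₂ := Y)) hc
    (hn ▸ Finset.card_le_card Finset.subset_union_right)
  refine (hm u ?_ h3).trans (quantE_anti _ _ hne h1)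
  intro x hx
  have := h2 hx
  rcases Finset.mem_union.1 this with h | h
  · exact hZ h
  · exact hQ h

lemma infDist_le_dist (Y : Finset E3) (x z : E3) (hz : z ∈ Y) : Metric.infDist x (↑Y : Set E3) ≤ dist x z :=
  Metric.infDist_le_dist_of_mem (by exact_mod_cast hz)

lemma infDist_eq (Y : Finset E3) (hne : Y.Nonempty) (x : E3) :
    ∃ z ∈ Y, Metric.infDist x (↑Y : Set E3) = dist x z := by
  obtain ⟨z, h1, h2⟩ := (Y.finite_toSet.isCompact).exists_infDist_eq_dist (by simpa using hne) x
  exact ⟨z, by exact_mod_cast h1, h2⟩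

lemma vor_closed (Y : Finset E3) (y : E3) : IsClosed (vorCell Y y) := by
  have : vorCell Y y = Qcube ∩ ⋂ z ∈ Y, {x | dist x y ≤ dist x z} := by
    ext x; simp [vorCell]
  rw [this]
  refine Q_closed.inter (isClosed_biInter fun z _ => ?_)
  exact isClosed_le (by fun_prop) (by fun_prop)

lemma vor_sub (Y : Finset E3) (y : E3) : vorCell Y y ⊆ Qcube := fun _ h => h.1

lemma vor_compact (Y : Finset E3) (y : E3) : IsCompact (vorCell Y y) :=
  Q_compact.of_isClosed_subset (vor_closed Y y) (vor_sub Y y)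

lemma expand (Y : Finset E3) (y c : E3) :
    ∫ x in vorCell Y y, (dist x c ^ 2 - dist x y ^ 2) =
    volume.real (vorCell Y y) * dist c y ^ 2 -
      2 * inner ℝ (∫ x in vorCell Y y, (x - y)) (c - y) := by
  have h1 : ∀ x : E3, dist x c ^ 2 - dist x y ^ 2 = dist c y ^ 2 - 2 * inner ℝ (c - y) (x - y) := by
    intro x
    rw [dist_eq_norm, dist_eq_norm, dist_eq_norm, show x - c = (x - y) - (c - y) by abel,
      norm_sub_sq_real, real_inner_comm]
    ring
  have hi : IntegrableOn (fun x : E3 => x - y) (vorCell Y y) :=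
    (by fun_prop : Continuous fun x : E3 => x - y).continuousOn.integrableOn_compact (vor_compact Y y)
  simp_rw [h1]
  rw [integral_sub ((continuous_const).continuousOn.integrableOn_compact (vor_compact Y y))
    ((by fun_prop : Continuous fun x : E3 => 2 * inner ℝ (c - y) (x - y)).continuousOn.integrableOn_compact (vor_compact Y y))]
  rw [integral_const_mul, integral_inner hi, real_inner_comm]
  simp

lemma swap_bound (Y Z : Finset E3) (y c : E3) (hyY : y ∈ Y) (hZ : Y.erase y ⊆ Z) (hc : c ∈ Z) :
    quantE Z ≤ quantE Y + ∫ x in vorCell Y y, (dist x c ^ 2 - dist x y ^ 2) := by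
  have hi : IntegrableOn (fun x : E3 => dist x c ^ 2 - dist x y ^ 2) (vorCell Y y) :=
    (by fun_prop : Continuous fun x : E3 => dist x c ^ 2 - dist x y ^ 2).continuousOn.integrableOn_compact (vor_compact Y y)
  have hm := (vor_closed Y y).measurableSet
  have h1 : ∫ x in vorCell Y y, (dist x c ^ 2 - dist x y ^ 2) =
      ∫ x in Qcube, (vorCell Y y).indicator (fun x => dist x c ^ 2 - dist x y ^ 2) x := by
    rw [setIntegral_indicator hm, Set.inter_eq_right.2 (vor_sub Y y)]
  rw [h1, quantE, quantE, ← integral_add (infDist_int Y) ((integrable_indicator_iff hm).2 hi).integrableOn]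
  apply setIntegral_mono_on (infDist_int Z) ((infDist_int Y).add ((integrable_indicator_iff hm).2 hi).integrableOn) Q_meas
  intro x hx
  rw [Pi.add_apply]
  obtain ⟨w, hw, hwe⟩ := infDist_eq Y ⟨y, hyY⟩ x
  by_cases hxV : x ∈ vorCell Y y
  · rw [Set.indicator_of_mem hxV]
    have h2 : dist x y = Metric.infDist x (↑Y : Set E3) :=
      le_antisymm (hwe ▸ hxV.2 w hw) (infDist_le_dist Y x y hyY)
    rw [← h2]
    have := pow_le_pow_left₀ Metric.infDist_nonneg (infDist_le_dist Z x c hc) 2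
    linarith
  · rw [Set.indicator_of_notMem hxV, add_zero, hwe]
    apply pow_le_pow_left₀ Metric.infDist_nonneg
    apply infDist_le_dist
    apply hZ
    refine Finset.mem_erase.2 ⟨?_, hw⟩
    rintro rfl
    exact hxV ⟨hx, fun z hz => hwe ▸ infDist_le_dist Y x z hz⟩

lemma cost (n : ℕ) (Y : Finset E3) (hY : IsMinimizer n Y) (y : E3) (hyY : y ∈ Y)
    (hX : (Y.erase y).Nonempty) :
    quantE (Y.erase y) ≤ quantE Y + 4 * Metric.diam (vorCell Y y) ^ 5 := by
  classical
  set V := vorCell Y y with hV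
  set d := Metric.diam V
  have hYQ := hY.1
  have hbd : Bornology.IsBounded V := (vor_compact Y y).isBounded
  set w := ∫ x in V, (x - y) with hw
  have hfin : volume V ≠ ⊤ := (vor_compact Y y).measure_lt_top.ne
  have hix : IntegrableOn (fun x : E3 => x) V :=
    continuous_id.continuousOn.integrableOn_compact (vor_compact Y y)
  have hw0 : w = 0 := by
    by_cases hv : volume V = 0
    · rw [hw]; exact setIntegral_measure_zero _ hv
    have hvp : 0 < volume.real V := ENNReal.toReal_pos hv hfin
    set c := ⨍ x in V, x with hc
    have hcQ : c ∈ Qcube := Q_convex.set_average_mem Q_closed hv hfin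
      ((ae_restrict_iff' (vor_closed Y y).measurableSet).2 (Filter.Eventually.of_forall fun x hx => hx.1)) hix
    have hwc : w = volume.real V • (c - y) := by
      rw [hw, integral_sub hix (integrableOn_const hfin), hc, setAverage_eq, smul_sub, smul_smul, mul_inv_cancel₀ hvp.ne',
        one_smul]
      simp
    have h1 := swap_bound Y (insert c (Y.erase y)) y c hyY (Finset.subset_insert _ _) (Finset.mem_insert_self _ _)
    have h2 := min_le n Y (insert c (Y.erase y)) hY
      (by
        intro x hx
        rcases Finset.mem_insert.1 (Finset.mem_coe.1 hx) with rfl | h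
        · exact hcQ
        · exact hYQ (Finset.mem_of_mem_erase h)) (Finset.insert_nonempty _ _)
      (by
        refine (Finset.card_insert_le _ _).trans ?_
        rw [Finset.card_erase_add_one hyY, hY.2.1])
    rw [expand, ← hV, ← hw, hwc, inner_smul_left, real_inner_self_eq_norm_sq, dist_eq_norm] at h1
    simp at h1
    have h3 : volume.real V * ‖c - y‖ ^ 2 ≤ 0 := by linarith
    have h4 : ‖c - y‖ ^ 2 ≤ 0 := by
      by_contra! h
      nlinarith [mul_pos hvp h]
    have h5 : ‖c - y‖ = 0 := by
      have := sq_nonneg ‖c - y‖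
      exact pow_eq_zero_iff (two_ne_zero) |>.1 (le_antisymm h4 this)
    rw [hwc, norm_eq_zero.1 h5, smul_zero]
  obtain ⟨z, hz, hzm⟩ := Finset.exists_min_image (Y.erase y) (fun z => dist y z) hX
  have h1 := swap_bound Y (Y.erase y) y z hyY (Finset.Subset.refl _) hz
  rw [expand, ← hV, ← hw, hw0, inner_zero_left] at h1
  have hyV : y ∈ V := ⟨hYQ hyY, fun u _ => by simp⟩
  have hzQ : z ∈ Qcube := hYQ (Finset.mem_of_mem_erase hz)
  have hmV : midpoint ℝ y z ∈ V := by
    refine ⟨Q_convex.midpoint_mem (hYQ hyY) hzQ, fun u hu => ?_⟩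
    by_cases huy : u = y
    · rw [huy]
    have h2 := hzm u (Finset.mem_erase.2 ⟨huy, hu⟩)
    have h3 := dist_triangle y (midpoint ℝ y z) u
    have h4 : dist (midpoint ℝ y z) y = dist y z / 2 := by
      rw [dist_midpoint_left]; simp; ring
    rw [dist_comm y (midpoint ℝ y z)] at h3
    linarith
  have hzd : dist z y ≤ 2 * d := by
    have h4 : dist (midpoint ℝ y z) y = dist y z / 2 := by
      rw [dist_midpoint_left]; simp; ring
    have := Metric.dist_le_diam_of_mem hbd hmV hyV
    rw [h4, dist_comm y z] at this
    linarith
  have hd0 : 0 ≤ d := Metric.diam_nonneg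
  have h5 : volume.real V * dist z y ^ 2 ≤ d ^ 3 * (2 * d) ^ 2 := by
    apply mul_le_mul (vol_le_diam V (vor_sub Y y)) (pow_le_pow_left₀ dist_nonneg hzd 2)
      (by positivity) (by positivity)
  linarith [show d ^ 3 * (2 * d) ^ 2 = 4 * d ^ 5 by ring]

lemma cont_F (k : ℕ) (D : ℝ) (x : E3) : Continuous fun p : E3 => max 0 (D ^ k - dist x p ^ k) := by
  fun_prop

lemma int_F (k : ℕ) (hk : 1 ≤ k) (D : ℝ) (hD : 0 ≤ D) (x : E3) :
    Integrable fun p : E3 => max 0 (D ^ k - dist x p ^ k) := by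
  apply (cont_F k D x).integrable_of_hasCompactSupport
  apply HasCompactSupport.intro (isCompact_closedBall x D)
  intro p hp
  rw [Metric.mem_closedBall, not_le, dist_comm] at hp
  have := pow_le_pow_left₀ hD hp.le k
  exact max_eq_left (by linarith)

lemma bathtub (X : Finset E3) (hX : X.Nonempty) (R : ℝ) (hR : 0 ≤ R) :
    R ^ 5 - 5 / 8 * X.card * omega3 * R ^ 8 ≤
      ∫ x in Qcube, (min (Metric.infDist x (↑X : Set E3)) R) ^ 5 := by
  have h1 : ∀ z : E3, ∫ x in Qcube, max 0 (R ^ 5 - dist z x ^ 5) ≤ 5 / 8 * omega3 * R ^ 8 := by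
    intro z
    have h := radial 5 (by norm_num) R hR z
    have h2 := setIntegral_le_integral (s := Qcube) (int_F 5 (by norm_num) R hR z)
      (Filter.Eventually.of_forall fun x => le_max_left _ _)
    rw [h] at h2
    refine h2.trans (le_of_eq ?_)
    norm_num
    ring
  have h2 : ∫ x in Qcube, (R ^ 5 - ∑ z ∈ X, max 0 (R ^ 5 - dist z x ^ 5)) ≤
      ∫ x in Qcube, (min (Metric.infDist x (↑X : Set E3)) R) ^ 5 := by
    apply setIntegral_mono_on
    · exact (by fun_prop : Continuous _).continuousOn.integrableOn_compact Q_compact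
    · have := Metric.continuous_infDist_pt (X : Set E3)
      exact (by fun_prop : Continuous _).continuousOn.integrableOn_compact Q_compact
    · exact Q_meas
    intro x _
    obtain ⟨z, hz, he⟩ := infDist_eq X hX x
    have h3 : max 0 (R ^ 5 - dist z x ^ 5) ≤ ∑ z ∈ X, max 0 (R ^ 5 - dist z x ^ 5) :=
      Finset.single_le_sum (f := fun z => max 0 (R ^ 5 - dist z x ^ 5)) (fun _ _ => le_max_left _ _) hz
    rw [he, dist_comm x z]
    rcases le_total (dist z x) R with h | h
    · rw [min_eq_left h]
      have := le_max_right 0 (R ^ 5 - dist z x ^ 5)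
      linarith
    · rw [min_eq_right h]
      have := le_max_left 0 (R ^ 5 - dist z x ^ 5)
      linarith
  refine le_trans ?_ h2
  have hci : IntegrableOn (fun _ : E3 => R ^ 5) Qcube := integrableOn_const Q_compact.measure_lt_top.ne
  rw [integral_sub hci
    ((by fun_prop : Continuous _).continuousOn.integrableOn_compact Q_compact),
    integral_finsetSum _ (fun z _ => (int_F 5 (by norm_num) R hR z).integrableOn)]
  have h4 := Finset.sum_le_sum (fun z (_ : z ∈ X) => h1 z)
  simp only [Finset.sum_const, nsmul_eq_mul] at h4
  simp only [integral_const, measureReal_def, Measure.restrict_apply_univ, Q_vol]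
  simp
  linarith

def clampQ (p : E3) : E3 := WithLp.toLp 2 (fun i => max 0 (min 1 (p i)))

lemma clamp_mem (p : E3) : clampQ p ∈ Qcube := by
  intro i
  simp [clampQ]

lemma clamp_dist (x p : E3) (hx : x ∈ Qcube) : dist x (clampQ p) ≤ dist x p := by
  rw [EuclideanSpace.dist_eq, EuclideanSpace.dist_eq]
  apply Real.sqrt_le_sqrt
  apply Finset.sum_le_sum
  intro i _
  apply pow_le_pow_left₀ dist_nonneg
  obtain ⟨h0, h1⟩ := hx i
  rw [Real.dist_eq, Real.dist_eq]
  simp only [clampQ]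
  rcases le_total 1 (p i) with h | h
  · rw [min_eq_left h, max_eq_right (by norm_num), abs_of_nonpos (by linarith), abs_of_nonpos (by linarith)]
    linarith
  · rw [min_eq_right h]
    rcases le_total 0 (p i) with h' | h'
    · rw [max_eq_right h']
    · rw [max_eq_left h', abs_of_nonneg (by linarith), abs_of_nonneg (by linarith)]
      linarith

lemma gain (X : Finset E3) [DecidableEq E3] (hX : X.Nonempty) (R : ℝ) (hR : 0 ≤ R) (p : E3) :
    ∫ x in Qcube, max 0 ((min (Metric.infDist x (↑X : Set E3)) R) ^ 2 - dist x p ^ 2) ≤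
      quantE X - quantE (insert (clampQ p) X) := by
  rw [quantE, quantE, ← integral_sub (infDist_int _) (infDist_int _)]
  apply setIntegral_mono_on
  · have := Metric.continuous_infDist_pt (X : Set E3)
    exact (by fun_prop : Continuous _).continuousOn.integrableOn_compact Q_compact
  · exact (infDist_int _).sub (infDist_int _)
  · exact Q_meas
  intro x hx
  have hs := pow_le_pow_left₀ Metric.infDist_nonneg (Metric.infDist_le_infDist_of_subset (x := x)
    (by exact_mod_cast Finset.subset_insert (clampQ p) X : (X : Set E3) ⊆ (insert (clampQ p) X : Finset E3)) (by simpa using hX)) 2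
  have h1 := pow_le_pow_left₀ Metric.infDist_nonneg
    ((infDist_le_dist (insert (clampQ p) X) x _ (Finset.mem_insert_self _ _)).trans (clamp_dist x p hx)) 2
  have h2 := pow_le_pow_left₀ (le_min Metric.infDist_nonneg hR)
    (min_le_left (Metric.infDist x (↑X : Set E3)) R) 2
  apply max_le <;> linarith

lemma benefit (X : Finset E3) [DecidableEq E3] (hX : X.Nonempty) (A R : ℝ) (hR : 0 ≤ R)
    (hA : ∀ p ∈ Qcube, quantE X - quantE (insert p X) ≤ A) :
    2 / 5 * omega3 * (R ^ 5 - 5 / 8 * X.card * omega3 * R ^ 8) ≤ A * (1 + 2 * R) ^ 3 := by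
  set N : Set E3 := {x | ∀ i, x i ∈ Set.Icc (-R) (1 + R)} with hN
  have hNc : IsCompact N := box_compact _ _
  have hNv : volume.real N = (1 + 2 * R) ^ 3 := by
    rw [measureReal_def, hN, box_vol _ _ (by linarith), ENNReal.toReal_ofReal (pow_nonneg (by linarith) 3)]
    ring
  set D : E3 → ℝ := fun x => min (Metric.infDist x (↑X : Set E3)) R with hD
  have hDc : Continuous D := by
    have := Metric.continuous_infDist_pt (X : Set E3)
    fun_prop
  have hD0 : ∀ x, 0 ≤ D x := fun x => le_min Metric.infDist_nonneg hR
  have hint : Integrable (Function.uncurry fun (x p : E3) => max 0 (D x ^ 2 - dist x p ^ 2))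
      ((volume.restrict Qcube).prod (volume.restrict N)) := by
    rw [Measure.prod_restrict]
    exact (by fun_prop : Continuous (Function.uncurry fun (x p : E3) => max 0 (D x ^ 2 - dist x p ^ 2))).continuousOn.integrableOn_compact (Q_compact.prod hNc)
  have hsw := integral_integral_swap hint
  have hleft : ∫ x in Qcube, ∫ p in N, max 0 (D x ^ 2 - dist x p ^ 2) =
      2 / 5 * omega3 * ∫ x in Qcube, D x ^ 5 := by
    rw [← integral_const_mul]
    apply setIntegral_congr_fun Q_meas
    intro x hx
    simp only
    rw [setIntegral_eq_integral_of_forall_compl_eq_zero, radial 2 (by norm_num) _ (hD0 x)]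
    · norm_num; ring
    intro p hp
    apply max_eq_left
    by_contra! h
    apply hp
    have h1 : dist x p ≤ R := by
      have h2 : dist x p < D x := lt_of_pow_lt_pow_left₀ 2 (hD0 x) (by linarith)
      exact h2.le.trans (min_le_right _ _)
    intro i
    have h3 : |x i - p i| ≤ R := by
      have := PiLp.norm_apply_le (x - p) i
      rw [← dist_eq_norm] at this
      simpa using this.trans h1
    obtain ⟨h4, h5⟩ := abs_le.1 h3
    obtain ⟨h6, h7⟩ := hx i
    constructor <;> linarith
  have hright : ∫ p in N, ∫ x in Qcube, max 0 (D x ^ 2 - dist x p ^ 2) ≤ A * (1 + 2 * R) ^ 3 := by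
    have : ∫ p in N, ∫ x in Qcube, max 0 (D x ^ 2 - dist x p ^ 2) ≤ ∫ p in N, A := by
      apply setIntegral_mono_on hint.integral_prod_right (integrableOn_const hNc.measure_lt_top.ne) hNc.isClosed.measurableSet
      intro p _
      exact (gain X hX R hR p).trans (hA _ (clamp_mem p))
    refine this.trans (le_of_eq ?_)
    rw [setIntegral_const, hNv, smul_eq_mul, mul_comm]
  rw [hsw] at hleft
  have hb := bathtub X hX R hR
  have ho : 0 ≤ 2 / 5 * omega3 := by unfold omega3; positivity
  have := mul_le_mul_of_nonneg_left hb ho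
  linarith

lemma Gamma1_le : Gamma1 ≤ 0.543 / 40 := by
  unfold Gamma1
  have : (2 / 5 : ℝ) ^ ((2 : ℝ) / 3) ≤ 0.543 := by
    have h : ((2 / 5 : ℝ) ^ ((2 : ℝ) / 3)) ^ 3 ≤ 0.543 ^ 3 := by
      rw [← Real.rpow_natCast, ← Real.rpow_mul (by norm_num)]
      norm_num
    exact le_of_pow_le_pow_left₀ (by norm_num) (by norm_num) h
  linarith

lemma final (d t m : ℝ) (ht : 0 ≤ t) (hm : m * t ^ 3 = 1 - t ^ 3)
    (ht1 : t ≤ 1)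
    (h : 2 / 5 * omega3 * ((13/20 * t) ^ 5 - 5 / 8 * m * omega3 * (13/20 * t) ^ 8) ≤
      4 * d ^ 5 * (1 + 2 * (13/20 * t)) ^ 3) :
    Gamma1 * t ^ 5 ≤ omega3 * d ^ 5 := by
  have ho1 : 4.1887 ≤ omega3 := by unfold omega3; linarith [Real.pi_gt_d6]
  have ho2 : omega3 ≤ 4.1888 := by unfold omega3; linarith [Real.pi_lt_d6]
  have hpoly : 4 * (0.543 / 40) * (1 + 1.3 * t) ^ 3 ≤
      2 / 5 * 4.1887 ^ 2 * (13/20) ^ 5 * (1 - 5 / 8 * 4.1888 * (13/20) ^ 3 * (1 - t ^ 3)) := by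
    nlinarith [mul_nonneg ht (sq_nonneg (t - 0.6)), sq_nonneg (t - 0.6), mul_nonneg ht (sq_nonneg (t - 0.7)), sq_nonneg (t - 0.7)]
  have ht3 : t ^ 3 ≤ 1 := pow_le_one₀ ht ht1
  set c := 1 - 5 / 8 * omega3 * (13/20) ^ 3 * (1 - t ^ 3) with hc
  have hc1 : 1 - 5 / 8 * 4.1888 * (13/20) ^ 3 * (1 - t ^ 3) ≤ c := by
    rw [hc]; nlinarith
  have hc0 : 0 ≤ 1 - 5 / 8 * 4.1888 * (13/20) ^ 3 * (1 - t ^ 3) := by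
    have := pow_nonneg ht 3
    nlinarith
  have ho3 : (4.1887:ℝ) ^ 2 ≤ omega3 ^ 2 := pow_le_pow_left₀ (by norm_num) ho1 2
  have hpoly2 : 4 * Gamma1 * (1 + 1.3 * t) ^ 3 ≤ 2 / 5 * omega3 ^ 2 * (13/20) ^ 5 * c := by
    calc 4 * Gamma1 * (1 + 1.3 * t) ^ 3 ≤ 4 * (0.543 / 40) * (1 + 1.3 * t) ^ 3 := by
          have := Gamma1_le
          gcongr
      _ ≤ _ := hpoly
      _ ≤ _ := by gcongr
  have h2 : 2 / 5 * omega3 ^ 2 * (13/20) ^ 5 * c * t ^ 5 ≤ 4 * (omega3 * d ^ 5) * (1 + 1.3 * t) ^ 3 := by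
    have h3 := mul_le_mul_of_nonneg_left h (by linarith : 0 ≤ omega3)
    have h4 : 2 / 5 * omega3 ^ 2 * (13/20) ^ 5 * c * t ^ 5 = omega3 * (2 / 5 * omega3 * ((13/20 * t) ^ 5 - 5 / 8 * m * omega3 * (13/20 * t) ^ 8)) := by
      rw [hc, ← hm]; ring
    rw [h4]
    refine h3.trans (le_of_eq ?_)
    ring
  have h5 := mul_le_mul_of_nonneg_right hpoly2 (pow_nonneg ht 5)
  have hp : 0 < (1 + 1.3 * t) ^ 3 := by positivity
  by_contra! hcon
  have := mul_lt_mul_of_pos_right hcon hp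
  linarith

lemma conclude (d t : ℝ) (hd : 0 ≤ d) (ht : 0 ≤ t) (h : Gamma1 * t ^ 5 ≤ omega3 * d ^ 5) :
    Gamma3 * t ≤ d := by
  have ho : 0 < omega3 := by unfold omega3; positivity
  have hg : 0 < Gamma1 := by unfold Gamma1; positivity
  apply le_of_pow_le_pow_left₀ (n := 5) (by norm_num) hd
  have h1 : Gamma3 ^ 5 = omega3⁻¹ * Gamma1 := by
    unfold Gamma3
    rw [mul_pow, ← Real.rpow_natCast, ← Real.rpow_mul ho.le, ← Real.rpow_natCast,
      ← Real.rpow_mul hg.le]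
    norm_num
    left
    rw [Real.rpow_neg_one]
  rw [mul_pow, h1, mul_assoc]
  rw [inv_mul_le_iff₀ ho]
  exact h

theorem stmt_3 (n : ℕ) (hn : 1 ≤ n) (Y : Finset E3) (hY : IsMinimizer n Y)
    (y : E3) (hyY : y ∈ Y) :
    Metric.diam (vorCell Y y) ≥ Gamma3 * (n : ℝ) ^ (-(1 : ℝ) / 3) := by
  classical
  have hn0 : (0:ℝ) < n := by exact_mod_cast hn
  set t : ℝ := (n : ℝ) ^ (-(1 : ℝ) / 3) with ht
  have ht0 : 0 ≤ t := by positivity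
  have ht3 : (n : ℝ) * t ^ 3 = 1 := by
    rw [ht, ← Real.rpow_natCast, ← Real.rpow_mul hn0.le]
    norm_num
    rw [Real.rpow_neg_one, mul_inv_cancel₀ hn0.ne']
  have ht1 : t ≤ 1 := Real.rpow_le_one_of_one_le_of_nonpos (by exact_mod_cast hn) (by norm_num)
  set d := Metric.diam (vorCell Y y) with hd
  have hd0 : 0 ≤ d := Metric.diam_nonneg
  apply conclude d t hd0 ht0
  by_cases hX : (Y.erase y).Nonempty
  · have hcost := cost n Y hY y hyY hX
    have hcard : (Y.erase y).card + 1 = n := by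
      rw [Finset.card_erase_add_one hyY, hY.2.1]
    have hb := benefit (Y.erase y) hX (4 * d ^ 5) (13/20 * t) (by positivity) (by
      intro p hp
      have := min_le n Y (insert p (Y.erase y)) hY
        (by
          intro x hx
          rcases Finset.mem_insert.1 (Finset.mem_coe.1 hx) with rfl | h
          · exact hp
          · exact hY.1 (Finset.mem_of_mem_erase h)) (Finset.insert_nonempty _ _)
        (by
          refine (Finset.card_insert_le _ _).trans ?_
          rw [hcard])
      linarith)
    refine final d t ((Y.erase y).card) ht0 ?_ ht1 hb
    have : (((Y.erase y).card : ℝ)) = n - 1 := by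
      rw [← hcard]; push_cast; ring
    rw [this, sub_mul, ht3, one_mul]
  · have hV : vorCell Y y = Qcube := by
      ext x
      refine ⟨fun h => h.1, fun h => ⟨h, fun z hz => ?_⟩⟩
      have : z = y := by
        by_contra hne
        exact hX ⟨z, Finset.mem_erase.2 ⟨hne, hz⟩⟩
      rw [this]
    have h1 : 1 ≤ d ^ 3 := by
      have := vol_le_diam Qcube subset_rfl
      rw [hd, hV]
      simpa [measureReal_def, Q_vol] using this
    have h2 : 1 ≤ d := by
      by_contra! h
      have := pow_lt_one₀ hd0 h (n := 3) (by norm_num)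
      linarith
    have h3 : 1 ≤ d ^ 5 := one_le_pow₀ h2
    have h4 : t ^ 5 ≤ 1 := pow_le_one₀ ht0 ht1
    have ho1 : 4 ≤ omega3 := by unfold omega3; linarith [Real.pi_gt_three]
    have hg := Gamma1_le
    have hg0 : 0 ≤ Gamma1 := by unfold Gamma1; positivity
    nlinarith [pow_nonneg ht0 5]
end
end
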